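/- arXiv:1509.08278 — 3 statements merged into one kernel-verified Lean document; each statement's English description precedes it below -/
import Mathlib

section
/- Let G be a countable discrete group with a p.m.p. action σ on a probability space (X, ν) such that the diagonal action σ² : G ↷ (X², ν²) is weakly mixing and 𝕋-cocycle superrigid. Then the natural group homomorphism Ψ₂ : H²(G, 𝕋) → H²(G ↷ X; 𝕋), induced by sending a 2-cocycle c : G² → 𝕋 to the measurable 2-cocycle (g, h, x) ↦ c(g, h), is injective. Equivalently, if a 2-cocycle c : G² → 𝕋 admits a measurable map b : G × X → 𝕋 with c(g, h) = b(g, x)·b(h, g⁻¹x)·b(gh, x)⁻¹ for ν-a.e. x (all g, h ∈ G), then c is a 2-coboundary, i.e., c(g, h) = μ(g)⁻¹·μ(h)⁻¹·μ(gh) for some map μ : G → 𝕋. -/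
open MeasureTheory

noncomputable section

namespace AlgActCohomology

/-- The Borel σ-algebra on the circle group `𝕋 = {z ∈ ℂ : |z| = 1}`. -/
noncomputable instance : MeasurableSpace Circle := borel Circle
instance : BorelSpace Circle := ⟨rfl⟩

variable {G X : Type*}

/-- The diagonal action on a product. -/
def diag (a : G → X → X) : G → X × X → X × X := fun g p => (a g p.1, a g p.2)

/-- An action is ergodic if every measurable set invariant under every group element
has measure 0 or 1. -/
def IsErgodicAction [MeasurableSpace X] (a : G → X → X) (μ : Measure X) : Prop :=
  ∀ s : Set X, MeasurableSet s → (∀ g : G, a g ⁻¹' s = s) → μ s = 0 ∨ μ s = 1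

/-- An action is weakly mixing if the diagonal action on the square
(with the product measure) is ergodic. -/
def IsWeaklyMixing [MeasurableSpace X] (a : G → X → X) (μ : Measure X) : Prop :=
  IsErgodicAction (diag a) (μ.prod μ)

/-- A (p.m.p.) group action: `a : G → X → X` is an action of `G` and every `a g`
is measure preserving. -/
structure IsPmpAction [Group G] [MeasurableSpace X] (a : G → X → X) (μ : Measure X) :
    Prop where
  act_one : ∀ x, a 1 x = x
  act_mul : ∀ g h x, a (g * h) x = a g (a h x)
  measurePreserving : ∀ g, MeasurePreserving (a g) μ μ

/-- An algebraic action: an action of `G` by continuous (automatically bijective)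
additive automorphisms of a compact abelian group `X`. -/
structure IsAlgebraicAction [Group G] [AddCommGroup X] [TopologicalSpace X]
    (a : G → X → X) : Prop where
  act_one : ∀ x, a 1 x = x
  act_mul : ∀ g h x, a (g * h) x = a g (a h x)
  continuous : ∀ g, Continuous (a g)
  act_add : ∀ g x y, a g (x + y) = a g x + a g y

/-- A measurable `𝕋`-valued 1-cocycle for an action. -/
def IsCocycle1 [Group G] [MeasurableSpace X] (a : G → X → X) (μ : Measure X)
    (c : G → X → Circle) : Prop :=
  (∀ g, Measurable (c g)) ∧ ∀ g h : G, ∀ᵐ x ∂μ, c (g * h) x = c g x * c h (a g⁻¹ x)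

/-- An action is `𝕋`-cocycle superrigid if every measurable `𝕋`-valued 1-cocycle is
cohomologous to a group homomorphism `G → 𝕋`. -/
def IsCocycleSuperrigid [Group G] [MeasurableSpace X] (a : G → X → X) (μ : Measure X) :
    Prop :=
  ∀ c : G → X → Circle, IsCocycle1 a μ c →
    ∃ (lam : G →* Circle) (b : X → Circle), Measurable b ∧
      ∀ g : G, ∀ᵐ x ∂μ, c g x = lam g * (b (a g⁻¹ x) * (b x)⁻¹)

section Char

variable (X) [AddCommGroup X] [TopologicalSpace X]

/-- The Pontryagin dual `X̂` of a compact abelian group `X`: the group of continuous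
characters `X → 𝕋`, as a subgroup of the group of all functions `X → 𝕋`. -/
def charGroup : Subgroup (X → Circle) where
  carrier := {χ | Continuous χ ∧ ∀ x y, χ (x + y) = χ x * χ y}
  one_mem' := ⟨continuous_const, fun _ _ => (one_mul 1).symm⟩
  mul_mem' := fun h1 h2 => ⟨h1.1.mul h2.1, fun x y => by
    simp only [Pi.mul_apply, h1.2 x y, h2.2 x y]; exact mul_mul_mul_comm _ _ _ _⟩
  inv_mem' := fun h => ⟨h.1.inv, fun x y => by
    simp only [Pi.inv_apply, h.2 x y, mul_inv]⟩

end Char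

section Degree1

variable [Group G] [AddCommGroup X] [TopologicalSpace X]

/-- `Z¹(G, X̂)`: 1-cocycles of `G` with coefficients in the dual module `X̂`,
where `(g • χ) x = χ (a g⁻¹ x)`. -/
def modZ1 (a : G → X → X) : Subgroup (G → charGroup X) where
  carrier := {c | ∀ (g h : G) (x : X),
    ((c (g * h) : X → Circle)) x = (c h : X → Circle) (a g⁻¹ x) * (c g : X → Circle) x}
  one_mem' := by
    intro g h x
    simp
  mul_mem' := by
    intro c₁ c₂ h1 h2 g h x
    simp only [Pi.mul_apply, Subgroup.coe_mul]
    rw [h1 g h x, h2 g h x]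
    ac_rfl
  inv_mem' := by
    intro c hc g h x
    simp only [Pi.inv_apply, InvMemClass.coe_inv]
    rw [hc g h x, mul_inv]

/-- `B¹(G, X̂)`: 1-coboundaries. -/
def modB1 (a : G → X → X) : Subgroup (G → charGroup X) where
  carrier := {c | ∃ χ : charGroup X, ∀ (g : G) (x : X),
    (c g : X → Circle) x = (χ : X → Circle) (a g⁻¹ x) * ((χ : X → Circle) x)⁻¹}
  one_mem' := ⟨1, by intro g x; simp⟩
  mul_mem' := by
    rintro c₁ c₂ ⟨χ₁, h1⟩ ⟨χ₂, h2⟩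
    refine ⟨χ₁ * χ₂, fun g x => ?_⟩
    simp only [Pi.mul_apply, Subgroup.coe_mul]
    rw [h1 g x, h2 g x, mul_inv]
    ac_rfl
  inv_mem' := by
    rintro c ⟨χ, h⟩
    refine ⟨χ⁻¹, fun g x => ?_⟩
    simp only [Pi.inv_apply, InvMemClass.coe_inv]
    rw [h g x, mul_inv, inv_inv]

variable [MeasurableSpace X]

/-- Measurable `𝕋`-valued 1-cocycles for an action, as a subgroup of all maps
`G → X → 𝕋`. -/
def measZ1 (a : G → X → X) (μ : Measure X) : Subgroup (G → X → Circle) where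
  carrier := {c | (∀ g, Measurable (c g)) ∧
    ∀ g h : G, ∀ᵐ x ∂μ, c (g * h) x = c g x * c h (a g⁻¹ x)}
  one_mem' := ⟨fun _ => measurable_const, fun g h => ae_of_all _ fun x => by simp⟩
  mul_mem' := by
    rintro c₁ c₂ ⟨m1, h1⟩ ⟨m2, h2⟩
    refine ⟨fun g => (m1 g).mul (m2 g), fun g h => ?_⟩
    filter_upwards [h1 g h, h2 g h] with x e1 e2
    simp only [Pi.mul_apply]
    rw [e1, e2]
    ac_rfl
  inv_mem' := by
    rintro c ⟨m, hc⟩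
    refine ⟨fun g => (m g).inv, fun g h => ?_⟩
    filter_upwards [hc g h] with x e
    simp only [Pi.inv_apply]
    rw [e, mul_inv]

/-- The subgroup of measurable 1-cocycles that are cohomologous to (the cocycle
induced by) a group homomorphism `G → 𝕋`; this is the preimage in `Z¹(G ↷ X; 𝕋)` of
the subgroup `Ψ₁(H¹(G, 𝕋))` of `H¹(G ↷ X; 𝕋)`, so that
`H¹(G ↷ X; 𝕋)/Ψ₁(H¹(G, 𝕋)) = measZ1 ⧸ measBPsi1`. -/
def measBPsi1 (a : G → X → X) (μ : Measure X) : Subgroup (G → X → Circle) where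
  carrier := {c | ∃ (φ : G →* Circle) (b : X → Circle), Measurable b ∧
    ∀ g : G, ∀ᵐ x ∂μ, c g x = φ g * (b (a g⁻¹ x) * (b x)⁻¹)}
  one_mem' := ⟨1, 1, measurable_const, fun g => ae_of_all _ fun x => by simp⟩
  mul_mem' := by
    rintro c₁ c₂ ⟨φ₁, b₁, hb₁, h1⟩ ⟨φ₂, b₂, hb₂, h2⟩
    refine ⟨φ₁ * φ₂, b₁ * b₂, hb₁.mul hb₂, fun g => ?_⟩
    filter_upwards [h1 g, h2 g] with x e1 e2
    simp only [Pi.mul_apply, MonoidHom.mul_apply]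
    rw [e1, e2, mul_inv]
    ac_rfl
  inv_mem' := by
    rintro c ⟨φ, b, hb, h⟩
    refine ⟨φ⁻¹, b⁻¹, hb.inv, fun g => ?_⟩
    filter_upwards [h g] with x e
    simp only [Pi.inv_apply, MonoidHom.inv_apply]
    rw [e, mul_inv, mul_inv, inv_inv]

/-- The measurable cocycle induced by a module cocycle: evaluation of characters. -/
def ind1 (c : G → charGroup X) : G → X → Circle := fun g => (c g : X → Circle)

end Degree1

section Degree2

variable [Group G]

/-- A `𝕋`-valued 2-cocycle of the group `G` (for the trivial `G`-module `𝕋`). -/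
def IsGrpCocycle2 (θ : G → G → Circle) : Prop :=
  ∀ g₁ g₂ g₃ : G, θ g₂ g₃ * (θ (g₁ * g₂) g₃)⁻¹ * θ g₁ (g₂ * g₃) * (θ g₁ g₂)⁻¹ = 1

private lemma mul4 {M : Type*} [CommGroup M] {a₁ b₁ c₁ d₁ a₂ b₂ c₂ d₂ : M}
    (h₁ : a₁ * b₁⁻¹ * c₁ * d₁⁻¹ = 1) (h₂ : a₂ * b₂⁻¹ * c₂ * d₂⁻¹ = 1) :
    (a₁ * a₂) * (b₁ * b₂)⁻¹ * (c₁ * c₂) * (d₁ * d₂)⁻¹ = 1 := by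
  have e : (a₁ * a₂) * (b₁ * b₂)⁻¹ * (c₁ * c₂) * (d₁ * d₂)⁻¹
      = (a₁ * b₁⁻¹ * c₁ * d₁⁻¹) * (a₂ * b₂⁻¹ * c₂ * d₂⁻¹) := by
    simp only [mul_inv]; ac_rfl
  rw [e, h₁, h₂, one_mul]

private lemma inv4 {M : Type*} [CommGroup M] {a b c d : M}
    (h : a * b⁻¹ * c * d⁻¹ = 1) : a⁻¹ * b * c⁻¹ * d = 1 := by
  have e : a⁻¹ * b * c⁻¹ * d = (a * b⁻¹ * c * d⁻¹)⁻¹ := by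
    simp only [mul_inv, inv_inv]; try ac_rfl
  rw [e, h, inv_one]

variable [AddCommGroup X] [TopologicalSpace X]

/-- `Z²(G, X̂)`: 2-cocycles of `G` with coefficients in the dual module `X̂`. -/
def modZ2 (a : G → X → X) : Subgroup (G → G → charGroup X) where
  carrier := {c | ∀ (g₁ g₂ g₃ : G) (x : X),
    (c g₂ g₃ : X → Circle) (a g₁⁻¹ x) * ((c (g₁ * g₂) g₃ : X → Circle) x)⁻¹ *
      (c g₁ (g₂ * g₃) : X → Circle) x * ((c g₁ g₂ : X → Circle) x)⁻¹ = 1}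
  one_mem' := by intro g₁ g₂ g₃ x; simp
  mul_mem' := by
    intro c₁ c₂ h1 h2 g₁ g₂ g₃ x
    simp only [Pi.mul_apply, Subgroup.coe_mul]
    exact mul4 (h1 g₁ g₂ g₃ x) (h2 g₁ g₂ g₃ x)
  inv_mem' := by
    intro c hc g₁ g₂ g₃ x
    simp only [Pi.inv_apply, InvMemClass.coe_inv, inv_inv]
    exact inv4 (hc g₁ g₂ g₃ x)

/-- `B²(G, X̂)`: 2-coboundaries. -/
def modB2 (a : G → X → X) : Subgroup (G → G → charGroup X) where
  carrier := {c | ∃ b : G → charGroup X, ∀ (g h : G) (x : X),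
    (c g h : X → Circle) x =
      (b h : X → Circle) (a g⁻¹ x) * ((b (g * h) : X → Circle) x)⁻¹ * (b g : X → Circle) x}
  one_mem' := ⟨1, by intro g h x; simp⟩
  mul_mem' := by
    rintro c₁ c₂ ⟨b₁, h1⟩ ⟨b₂, h2⟩
    refine ⟨b₁ * b₂, fun g h x => ?_⟩
    simp only [Pi.mul_apply, Subgroup.coe_mul]
    rw [h1 g h x, h2 g h x, mul_inv]
    try ac_rfl
  inv_mem' := by
    rintro c ⟨b, hb⟩
    refine ⟨b⁻¹, fun g h x => ?_⟩
    simp only [Pi.inv_apply, InvMemClass.coe_inv]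
    rw [hb g h x]
    simp only [mul_inv, inv_inv]
    try ac_rfl

variable [MeasurableSpace X]

/-- Measurable `𝕋`-valued 2-cocycles for an action. -/
def measZ2 (a : G → X → X) (μ : Measure X) : Subgroup (G → G → X → Circle) where
  carrier := {c | (∀ g h, Measurable (c g h)) ∧
    ∀ g₁ g₂ g₃ : G, ∀ᵐ x ∂μ,
      c g₂ g₃ (a g₁⁻¹ x) * (c (g₁ * g₂) g₃ x)⁻¹ * c g₁ (g₂ * g₃) x * (c g₁ g₂ x)⁻¹ = 1}
  one_mem' := ⟨fun _ _ => measurable_const, fun g₁ g₂ g₃ => ae_of_all _ fun x => by simp⟩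
  mul_mem' := by
    rintro c₁ c₂ ⟨m1, h1⟩ ⟨m2, h2⟩
    refine ⟨fun g h => (m1 g h).mul (m2 g h), fun g₁ g₂ g₃ => ?_⟩
    filter_upwards [h1 g₁ g₂ g₃, h2 g₁ g₂ g₃] with x e1 e2
    simp only [Pi.mul_apply]
    exact mul4 e1 e2
  inv_mem' := by
    rintro c ⟨m, hc⟩
    refine ⟨fun g h => (m g h).inv, fun g₁ g₂ g₃ => ?_⟩
    filter_upwards [hc g₁ g₂ g₃] with x e
    simp only [Pi.inv_apply, inv_inv]
    exact inv4 e

/-- The subgroup of measurable 2-cocycles that are cohomologous to a constant (in the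
space variable) 2-cocycle coming from a group 2-cocycle `θ : G² → 𝕋`; this is the
preimage in `Z²(G ↷ X; 𝕋)` of the subgroup `Ψ₂(H²(G, 𝕋))` of `H²(G ↷ X; 𝕋)`, so that
`H²(G ↷ X; 𝕋)/Ψ₂(H²(G, 𝕋)) = measZ2 ⧸ measBPsi2`. -/
def measBPsi2 (a : G → X → X) (μ : Measure X) : Subgroup (G → G → X → Circle) where
  carrier := {c | ∃ (θ : G → G → Circle) (b : G → X → Circle), IsGrpCocycle2 θ ∧
    (∀ g, Measurable (b g)) ∧
    ∀ g h : G, ∀ᵐ x ∂μ, c g h x = θ g h * (b h (a g⁻¹ x) * (b (g * h) x)⁻¹ * b g x)}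
  one_mem' := ⟨fun _ _ => 1, fun _ => 1, fun g₁ g₂ g₃ => by simp, fun _ => measurable_const,
    fun g h => ae_of_all _ fun x => by simp⟩
  mul_mem' := by
    rintro c₁ c₂ ⟨θ₁, b₁, hθ₁, hb₁, h1⟩ ⟨θ₂, b₂, hθ₂, hb₂, h2⟩
    refine ⟨fun g h => θ₁ g h * θ₂ g h, fun g => b₁ g * b₂ g,
      fun g₁ g₂ g₃ => mul4 (hθ₁ g₁ g₂ g₃) (hθ₂ g₁ g₂ g₃),
      fun g => (hb₁ g).mul (hb₂ g), fun g h => ?_⟩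
    filter_upwards [h1 g h, h2 g h] with x e1 e2
    simp only [Pi.mul_apply]
    rw [e1, e2]
    simp only [mul_inv]
    ac_rfl
  inv_mem' := by
    rintro c ⟨θ, b, hθ, hb, hc⟩
    refine ⟨fun g h => (θ g h)⁻¹, fun g => (b g)⁻¹,
      fun g₁ g₂ g₃ => by simpa only [inv_inv] using inv4 (hθ g₁ g₂ g₃),
      fun g => (hb g).inv, fun g h => ?_⟩
    filter_upwards [hc g h] with x e
    simp only [Pi.inv_apply]
    rw [e]
    simp only [mul_inv, inv_inv]
    try ac_rfl

/-- The measurable 2-cocycle induced by a module 2-cocycle: evaluation of characters. -/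
def ind2 (c : G → G → charGroup X) : G → G → X → Circle := fun g h => (c g h : X → Circle)

end Degree2

/-!
If `c` is the coboundary of `b : G → X → 𝕋`, then `b` is a 1-cocycle up to scalars that do not
depend on `x`, so the scalars cancel in `(x, y) ↦ b g x / b g y`, which is a genuine 1-cocycle on
`X²`. By superrigidity it equals `lam g * (B ∘ g⁻¹ / B)`. Scalar factors and factors depending on
one coordinate only drop out of the cross ratio `B(x, y) B(z, w) / (B(x, w) B(z, y))`, so the latter
is `G`-invariant, hence constant by weak mixing, and therefore `B = β ⊗ γ`. Separating variables
gives `b g = n g * (β ∘ g⁻¹ / β)`, and `n` has the same coboundary `c` as `b`.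
-/

open Filter Function

section Ergodic

variable [Group G] [MeasurableSpace X] {μ : Measure X} {a : G → X → X}

lemma IsPmpAction.diag [SFinite μ] (ha : IsPmpAction a μ) :
    IsPmpAction (diag a) (μ.prod μ) where
  act_one q := Prod.ext (ha.act_one q.1) (ha.act_one q.2)
  act_mul g h q := Prod.ext (ha.act_mul g h q.1) (ha.act_mul g h q.2)
  measurePreserving g := (ha.measurePreserving g).prod (ha.measurePreserving g)

variable [Countable G] [IsProbabilityMeasure μ]

lemma IsErgodicAction.ae_mem_or_ae_notMem (herg : IsErgodicAction a μ) (ha : IsPmpAction a μ)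
    {s : Set X} (hs : MeasurableSet s) (hinv : ∀ g, a g ⁻¹' s =ᵐ[μ] s) :
    (∀ᵐ x ∂μ, x ∈ s) ∨ ∀ᵐ x ∂μ, x ∉ s := by
  -- `IsErgodicAction` only sees strictly invariant sets, so replace `s` by an invariant core.
  let t : Set X := ⋂ g, a g ⁻¹' s
  have ht : MeasurableSet t := .iInter fun g ↦ (ha.measurePreserving g).measurable hs
  have hts : t =ᵐ[μ] s := by
    simpa only [Set.iInter_const] using Filter.EventuallyEq.countable_iInter hinv
  have htinv (h : G) : a h ⁻¹' t = t := calc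
    a h ⁻¹' t = ⋂ g, a (g * h) ⁻¹' s := by
      ext x; simp only [t, Set.mem_preimage, Set.mem_iInter, ha.act_mul]
    _ = t := (Equiv.mulRight h).surjective.iInter_comp fun g ↦ a g ⁻¹' s
  rcases herg t ht htinv with h0 | h1
  · exact .inr (measure_eq_zero_iff_ae_notMem.1 ((measure_congr hts).symm.trans h0))
  · exact .inl ((mem_ae_iff_prob_eq_one hs).2 ((measure_congr hts).symm.trans h1))

lemma IsErgodicAction.exists_ae_eq_const {Z : Type*} [Nonempty Z] [MeasurableSpace Z]
    [MeasurableSpace.CountablySeparated Z] (herg : IsErgodicAction a μ) (ha : IsPmpAction a μ)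
    {F : X → Z} (hF : Measurable F) (hinv : ∀ g, F ∘ a g =ᵐ[μ] F) :
    ∃ k, F =ᵐ[μ] const X k :=
  exists_eventuallyEq_const_of_forall_separating MeasurableSet fun _U hU ↦
    herg.ae_mem_or_ae_notMem ha (hF hU) fun g ↦ (hinv g).preimage _

end Ergodic

section CrossRatio

variable {Y M : Type*} [CommGroup M]

/-- The multiplicative cross ratio `f(x, y) f(z, w) / (f(x, w) f(z, y))` of a function of two
variables at the pair of points `(x, y)`, `(z, w)`. It measures the failure of `f` to be a product
of functions of one variable. -/
def crossRatio (f : X × Y → M) (p : (X × Y) × (X × Y)) : M :=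
  f p.1 * f p.2 / (f (p.1.1, p.2.2) * f (p.2.1, p.1.2))

lemma crossRatio_mul_split (f : X × Y → M) (u : X → M) (v : Y → M) :
    crossRatio (fun q ↦ f q * (u q.1 * v q.2)) = crossRatio f := by
  funext ⟨⟨x, y⟩, ⟨z, w⟩⟩
  calc f (x, y) * (u x * v y) * (f (z, w) * (u z * v w)) /
        (f (x, w) * (u x * v w) * (f (z, y) * (u z * v y)))
      = f (x, y) * f (z, w) * (u x * v y * u z * v w) /
          (f (x, w) * f (z, y) * (u x * v y * u z * v w)) := by congr 1 <;> ac_rfl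
    _ = f (x, y) * f (z, w) / (f (x, w) * f (z, y)) := mul_div_mul_right_eq_div _ _ _

variable [MeasurableSpace X] [MeasurableSpace Y] {μ : Measure X} {ν : Measure Y}

lemma measurable_crossRatio [MeasurableSpace M] [MeasurableMul₂ M] [MeasurableDiv₂ M]
    {f : X × Y → M} (hf : Measurable f) : Measurable (crossRatio f) := by
  unfold crossRatio
  fun_prop

variable [SFinite μ] [SFinite ν]

lemma crossRatio_congr_ae {f f' : X × Y → M} (h : f =ᵐ[μ.prod ν] f') :
    crossRatio f =ᵐ[(μ.prod ν).prod (μ.prod ν)] crossRatio f' := by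
  have hcross : Measure.QuasiMeasurePreserving (fun p : (X × Y) × (X × Y) ↦ (p.1.1, p.2.2))
      ((μ.prod ν).prod (μ.prod ν)) (μ.prod ν) :=
    QuasiMeasurePreserving.prodMap Measure.quasiMeasurePreserving_fst
      Measure.quasiMeasurePreserving_snd
  have hcross' : Measure.QuasiMeasurePreserving (fun p : (X × Y) × (X × Y) ↦ (p.2.1, p.1.2))
      ((μ.prod ν).prod (μ.prod ν)) (μ.prod ν) :=
    hcross.comp Measure.measurePreserving_swap.quasiMeasurePreserving
  filter_upwards [Measure.quasiMeasurePreserving_fst.ae h, Measure.quasiMeasurePreserving_snd.ae h,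
    hcross.ae h, hcross'.ae h] with p h₁ h₂ h₃ h₄
  rw [crossRatio, crossRatio, h₁, h₂, h₃, h₄]

lemma exists_ae_eq_mul_of_crossRatio_ae_eq_const [NeZero (μ.prod ν)] {f : X × Y → M} {k : M}
    (h : crossRatio f =ᵐ[(μ.prod ν).prod (μ.prod ν)] const _ k) :
    ∃ (β : X → M) (γ : Y → M), f =ᵐ[μ.prod ν] fun q ↦ β q.1 * γ q.2 := by
  obtain ⟨⟨x₀, y₀⟩, h₀⟩ := (Measure.ae_ae_of_ae_prod h).exists
  refine ⟨fun x ↦ k * f (x, y₀) / f (x₀, y₀), fun y ↦ f (x₀, y), ?_⟩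
  filter_upwards [h₀] with q hq
  have hq' : f (x₀, y₀) * f q = k * (f (x₀, q.2) * f (q.1, y₀)) := div_eq_iff_eq_mul.1 hq
  rw [div_mul_eq_mul_div, eq_div_iff_mul_eq', mul_comm (f q), hq']
  ac_rfl

end CrossRatio

section SeparationOfVariables

variable {Y Z M : Type*} [MeasurableSpace X] {μ : Measure X}

lemma exists_ae_eq_const_of_ae_prod_eq [MeasurableSpace Y] {ν : Measure Y} [SFinite ν]
    [NeZero μ] [NeZero ν] {u : X → Z} {v : Y → Z} (h : ∀ᵐ q ∂μ.prod ν, u q.1 = v q.2) :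
    ∃ k, ∀ᵐ x ∂μ, u x = k := by
  have huv := Measure.ae_ae_of_ae_prod h
  obtain ⟨x₀, hx₀⟩ := huv.exists
  refine ⟨u x₀, huv.mono fun x hx ↦ ?_⟩
  obtain ⟨y, hxy, hx₀y⟩ := (hx.and hx₀).exists
  exact hxy.trans hx₀y.symm

variable [CommGroup M] [SFinite μ] {T : X → X} {b : X → M} {B : X × X → M} {l : M}

lemma crossRatio_comp_prodMap_ae_eq
    (h : ∀ᵐ q ∂μ.prod μ, b q.1 / b q.2 = l * (B (Prod.map T T q) * (B q)⁻¹)) :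
    crossRatio B ∘ Prod.map (Prod.map T T) (Prod.map T T)
      =ᵐ[(μ.prod μ).prod (μ.prod μ)] crossRatio B := by
  have hB : B ∘ Prod.map T T =ᵐ[μ.prod μ] fun q ↦ B q * (l⁻¹ * b q.1 * (b q.2)⁻¹) := by
    filter_upwards [h] with q hq
    rw [mul_assoc l⁻¹, ← div_eq_mul_inv, hq, inv_mul_cancel_left, mul_comm (B q),
      inv_mul_cancel_right, comp_apply]
  exact (crossRatio_congr_ae hB).trans
    (.of_eq (crossRatio_mul_split B (fun x ↦ l⁻¹ * b x) fun y ↦ (b y)⁻¹))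

lemma exists_ae_eq_const_mul_of_ae_eq_mul [NeZero μ] {β γ : X → M}
    (hT : Measure.QuasiMeasurePreserving T μ μ)
    (h : ∀ᵐ q ∂μ.prod μ, b q.1 / b q.2 = l * (B (Prod.map T T q) * (B q)⁻¹))
    (hB : B =ᵐ[μ.prod μ] fun q ↦ β q.1 * γ q.2) :
    ∃ n, ∀ᵐ x ∂μ, b x = n * (β (T x) * (β x)⁻¹) := by
  have hsep : ∀ᵐ q ∂μ.prod μ,
      b q.1 / (β (T q.1) * (β q.1)⁻¹) = l * b q.2 * (γ (T q.2) * (γ q.2)⁻¹) := by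
    filter_upwards [h, hB, (QuasiMeasurePreserving.prodMap hT hT).ae hB] with q hq hBq hBTq
    rw [div_eq_iff_eq_mul, hBq, hBTq] at hq
    simp only [Prod.map_fst, Prod.map_snd, mul_inv] at hq
    rw [div_eq_iff_eq_mul, hq]
    ac_rfl
  obtain ⟨n, hn⟩ := exists_ae_eq_const_of_ae_prod_eq
    (u := fun x ↦ b x / (β (T x) * (β x)⁻¹)) (v := fun y ↦ l * b y * (γ (T y) * (γ y)⁻¹)) hsep
  exact ⟨n, hn.mono fun x hx ↦ div_eq_iff_eq_mul.1 hx⟩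

end SeparationOfVariables

section ProjectiveCocycle

variable {M : Type*} [CommGroup M] [Group G] [MeasurableSpace X] {μ : Measure X} {a : G → X → X}

/-- `b` is a projective 1-cocycle with multiplier `c`: it satisfies the 1-cocycle identity up to the
scalars `c g h`. Equivalently, the 2-cocycle `(g, h, x) ↦ c g h` is the coboundary of `b`. -/
def IsProjectiveCocycle (a : G → X → X) (μ : Measure X) (c : G → G → M) (b : G → X → M) : Prop :=
  ∀ g h : G, ∀ᵐ x ∂μ, c g h = b g x * b h (a g⁻¹ x) * (b (g * h) x)⁻¹

lemma IsProjectiveCocycle.isCocycle1_div [SFinite μ] {c : G → G → Circle} {b : G → X → Circle}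
    (hb : IsProjectiveCocycle a μ c b) (hbm : ∀ g, Measurable (b g)) :
    IsCocycle1 (diag a) (μ.prod μ) fun g q ↦ b g q.1 / b g q.2 := by
  refine ⟨fun g ↦ ((hbm g).comp measurable_fst).div ((hbm g).comp measurable_snd), fun g h ↦ ?_⟩
  filter_upwards [Measure.quasiMeasurePreserving_fst.ae (hb g h),
    Measure.quasiMeasurePreserving_snd.ae (hb g h)] with q h₁ h₂
  have key := h₁.symm.trans h₂
  rw [← div_eq_mul_inv, ← div_eq_mul_inv, div_eq_div_iff_div_eq_div] at key
  rw [← key, mul_div_mul_comm]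
  rfl

lemma IsProjectiveCocycle.multiplier_eq [NeZero μ] {c : G → G → M} {b : G → X → M} {n : G → M}
    {β : X → M} (hb : IsProjectiveCocycle a μ c b) (ha : IsPmpAction a μ)
    (hn : ∀ g, ∀ᵐ x ∂μ, b g x = n g * (β (a g⁻¹ x) * (β x)⁻¹)) (g h : G) :
    c g h = n g * n h * (n (g * h))⁻¹ := by
  have hn_translate := (ha.measurePreserving g⁻¹).quasiMeasurePreserving.ae (hn h)
  obtain ⟨x, hc, hg, hh, hgh⟩ := ((hb g h).and ((hn g).and (hn_translate.and (hn (g * h))))).exists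
  rw [mul_inv_rev, ha.act_mul] at hgh
  simp only [← div_eq_mul_inv] at hc hg hh hgh ⊢
  rw [hc, hg, hh, hgh, mul_mul_mul_comm, mul_comm (β (a g⁻¹ x) / β x), div_mul_div_cancel,
    mul_div_mul_right_eq_div]

end ProjectiveCocycle

/-- If the diagonal action on `(X², ν²)` is weakly mixing and
`𝕋`-cocycle superrigid, then the natural map `Ψ₂ : H²(G, 𝕋) → H²(G ↷ X; 𝕋)` is
injective: if a group 2-cocycle `c : G² → 𝕋`, viewed as a constant-in-`x` measurable
2-cocycle, is a measurable 2-coboundary, then `c` is a 2-coboundary of the group. -/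
theorem psi2_injective_of_superrigid_square
    {G X : Type*} [Group G] [Countable G] [MeasurableSpace X]
    (ν : Measure X) [IsProbabilityMeasure ν]
    (a : G → X → X) (hpmp : IsPmpAction a ν)
    (hwm : IsWeaklyMixing (diag a) (ν.prod ν))
    (hsr : IsCocycleSuperrigid (diag a) (ν.prod ν))
    (c : G → G → Circle) (hc : IsGrpCocycle2 c)
    (b : G → X → Circle) (hb : ∀ g : G, Measurable (b g))
    (h : ∀ g h : G, ∀ᵐ x ∂ν, c g h = b g x * b h (a g⁻¹ x) * (b (g * h) x)⁻¹) :
    ∃ m : G → Circle, ∀ g h : G, c g h = (m g)⁻¹ * (m h)⁻¹ * m (g * h) := by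
  have hb_proj : IsProjectiveCocycle a ν c b := h
  obtain ⟨lam, B, hB, hlam⟩ := hsr _ (hb_proj.isCocycle1_div hb)
  have hinv (g : G) : crossRatio B ∘ diag (diag a) g =ᵐ[(ν.prod ν).prod (ν.prod ν)] crossRatio B :=
    crossRatio_comp_prodMap_ae_eq (by simpa only [inv_inv] using! hlam g⁻¹)
  obtain ⟨k, hk⟩ := IsErgodicAction.exists_ae_eq_const hwm hpmp.diag.diag
    (measurable_crossRatio hB) hinv
  obtain ⟨β, γ, hβγ⟩ := exists_ae_eq_mul_of_crossRatio_ae_eq_const hk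
  choose n hn using fun g ↦ exists_ae_eq_const_mul_of_ae_eq_mul
    (hpmp.measurePreserving g⁻¹).quasiMeasurePreserving (hlam g) hβγ
  refine ⟨n⁻¹, fun g k ↦ ?_⟩
  simpa only [Pi.inv_apply, inv_inv] using hb_proj.multiplier_eq hpmp hn g k

end AlgActCohomology
end
end

section
/- Let G be a countable infinite discrete group such that for every standard probability space (X₀, μ₀) the Bernoulli shift G ↷ (X₀^G, μ₀^G) is 𝕋-cocycle superrigid (i.e., G belongs to the class 𝒢; for example, this holds when G has property (T)). Then the second group cohomology H²(G, ℤG), where ℤG is the integral group ring with G acting by left multiplication, is torsion free as an abelian group. -/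
open MeasureTheory

noncomputable section

namespace AlgActCohomology

variable {G X : Type*}

section Bernoulli

/-- The Bernoulli shift action `G ↷ X₀^G`, `(g • x) h = x (g⁻¹ h)`. -/
def bernoulliShift (G X₀ : Type*) [Group G] : G → (G → X₀) → (G → X₀) :=
  fun g x h => x (g⁻¹ * h)

/-- `μ` is the product along `ι` of copies of `μ₀`: it gives every finite-dimensional
cylinder set its product measure.  (This characterizes the Bernoulli product measure
`μ₀^ι` uniquely.) -/
def IsBernoulliMeasure {ι X₀ : Type*} [MeasurableSpace X₀] (μ₀ : Measure X₀)
    (μ : Measure (ι → X₀)) : Prop :=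
  ∀ (s : Finset ι) (t : ι → Set X₀), (∀ i, MeasurableSet (t i)) →
    μ {x | ∀ i ∈ s, x i ∈ t i} = ∏ i ∈ s, μ₀ (t i)

/-- The class `𝒢` of countable groups `G` such that for every standard probability
space `(X₀, μ₀)` the Bernoulli shift `G ↷ (X₀^G, μ₀^G)` is `𝕋`-cocycle superrigid. -/
def InClassG (G : Type*) [Group G] : Prop :=
  ∀ (X₀ : Type) [MeasurableSpace X₀] [StandardBorelSpace X₀]
    (μ₀ : Measure X₀) [IsProbabilityMeasure μ₀]
    (μ : Measure (G → X₀)) [IsProbabilityMeasure μ],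
    IsBernoulliMeasure μ₀ μ → IsCocycleSuperrigid (bernoulliShift G X₀) μ

end Bernoulli

/- The idea: a measurable function `b : X → 𝕋` which untwists a cocycle `c : G → X̂` up to a
homomorphism `G → 𝕋` satisfies `|b̂ (g • χ - c g)| = |b̂ χ|`. Fourier coefficients are square
summable, so the affine action `χ ↦ g • χ - c g` preserves a nonempty finite set of characters. When
nontrivial characters have infinite orbits, this forces a fixed point, so `c` is a coboundary.

For the Bernoulli shift with base `ℤ/n` the dual module is `ℤG/nℤG`. Hence superrigidity gives
`H¹(G, ℤG/nℤG) = 0`, and the long exact sequence of `0 → ℤG → ℤG → ℤG/nℤG → 0` shows that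
multiplication by `n` is injective on `H²(G, ℤG)`. -/

section Characters

lemma continuous_coe_circle : Continuous fun z : Circle => (z : ℂ) :=
  continuous_induced_dom

variable [AddCommGroup X] [TopologicalSpace X]

namespace charGroup

/-- The inclusion of the characters of `X` into the algebra of continuous functions `X → ℂ`. -/
def toContinuousMap : charGroup X →* C(X, ℂ) where
  toFun χ := ⟨fun x => χ.1 x, continuous_coe_circle.comp χ.2.1⟩
  map_one' := by ext; simp
  map_mul' _ _ := by ext; simp

/-- A group of characters separates the points of `X`. -/
abbrev SeparatesPoints (Γ : Subgroup (charGroup X)) : Prop :=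
  Set.SeparatesPoints ((fun χ : charGroup X => χ.1) '' Γ)

lemma star_toContinuousMap (χ : charGroup X) :
    star (toContinuousMap χ) = toContinuousMap χ⁻¹ := by
  ext x
  exact (Circle.coe_inv_eq_conj (χ.1 x)).symm

theorem topologicalClosure_span_eq_top [CompactSpace X] {Γ : Subgroup (charGroup X)}
    (hΓ : SeparatesPoints Γ) :
    (Submodule.span ℂ (toContinuousMap '' (Γ : Set (charGroup X)))).topologicalClosure = ⊤ := by
  have star_image : star (toContinuousMap '' (Γ : Set (charGroup X))) = toContinuousMap '' Γ := by
    ext f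
    constructor
    · rintro ⟨χ, hχ, h⟩
      exact ⟨χ⁻¹, inv_mem hχ, by rw [← star_toContinuousMap, h, star_star]⟩
    · rintro ⟨χ, hχ, rfl⟩
      exact ⟨χ⁻¹, inv_mem hχ, by rw [star_toContinuousMap]⟩
  have adjoin_eq_span : Subalgebra.toSubmodule
      (StarAlgebra.adjoin ℂ (toContinuousMap '' (Γ : Set (charGroup X)))).toSubalgebra =
        Submodule.span ℂ (toContinuousMap '' Γ) := by
    rw [StarAlgebra.adjoin_eq_span, star_image, Set.union_self]
    have h := (Γ.toSubmonoid.map toContinuousMap).closure_eq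
    exact congrArg (fun S : Submonoid C(X, ℂ) => Submodule.span ℂ (S : Set C(X, ℂ))) h
  rw [← adjoin_eq_span]
  refine congrArg (fun A : StarSubalgebra ℂ C(X, ℂ) => Subalgebra.toSubmodule A.toSubalgebra)
    (ContinuousMap.starSubalgebra_topologicalClosure_eq_top_of_separatesPoints _ ?_)
  intro x y hxy
  obtain ⟨_, ⟨χ, hχ, rfl⟩, hne⟩ := hΓ hxy
  exact ⟨_, ⟨toContinuousMap χ, StarAlgebra.subset_adjoin ℂ _ ⟨χ, hχ, rfl⟩, rfl⟩,
    fun h => hne (Circle.ext h)⟩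

lemma integral_eq_zero_of_ne_one [MeasurableSpace X] [MeasurableAdd X] (μ : Measure X)
    [μ.IsAddLeftInvariant] {χ : charGroup X} (hχ : χ ≠ 1) : ∫ x, (χ.1 x : ℂ) ∂μ = 0 := by
  obtain ⟨y, hy⟩ : ∃ y, χ.1 y ≠ 1 := by
    by_contra! h
    exact hχ (Subtype.ext (funext h))
  have translate : (χ.1 y : ℂ) * ∫ x, (χ.1 x : ℂ) ∂μ = ∫ x, (χ.1 x : ℂ) ∂μ := by
    rw [← integral_const_mul, ← integral_add_left_eq_self (fun x => (χ.1 x : ℂ)) y]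
    simp only [χ.2.2, Circle.coe_mul]
  exact (mul_left_eq_self₀.mp translate).resolve_left fun h => hy (Circle.ext h)

section L2

variable [CompactSpace X] [MeasurableSpace X] [BorelSpace X] (μ : Measure X)

/-- A character of `X` as a vector of `L²(X, μ)`. -/
def toL2 [IsFiniteMeasure μ] (χ : charGroup X) : Lp ℂ 2 μ :=
  ContinuousMap.toLp 2 μ ℂ (toContinuousMap χ)

lemma coeFn_toL2 [IsFiniteMeasure μ] (χ : charGroup X) : toL2 μ χ =ᵐ[μ] fun x => (χ.1 x : ℂ) :=
  ContinuousMap.coeFn_toLp μ (toContinuousMap χ)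

theorem orthonormal_toL2 [IsTopologicalAddGroup X] [IsProbabilityMeasure μ]
    [μ.IsAddLeftInvariant] : Orthonormal ℂ (toL2 (X := X) μ) := by
  classical
  rw [orthonormal_iff_ite]
  intro χ ψ
  have inner_eq : inner ℂ (toL2 μ χ) (toL2 μ ψ) = ∫ x, ((ψ * χ⁻¹).1 x : ℂ) ∂μ := by
    rw [toL2, toL2, ContinuousMap.inner_toLp]
    simp [toContinuousMap, Circle.coe_inv_eq_conj, -Circle.coe_inv, mul_comm]
  rw [inner_eq]
  split_ifs with h
  · simp [h]
  · exact integral_eq_zero_of_ne_one μ (by rwa [ne_eq, mul_inv_eq_one, eq_comm])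

theorem eq_zero_of_inner_toL2_eq_zero [IsTopologicalAddGroup X] [IsFiniteMeasure μ]
    [μ.WeaklyRegular]
    {Γ : Subgroup (charGroup X)} (hΓ : SeparatesPoints Γ) {f : Lp ℂ 2 μ}
    (hf : ∀ χ ∈ Γ, inner ℂ (toL2 μ χ) f = 0) : f = 0 := by
  have dense : (Submodule.span ℂ (toL2 μ '' (Γ : Set (charGroup X)))).topologicalClosure = ⊤ := by
    have h := (ContinuousMap.toLp_denseRange ℂ μ ℂ (p := 2)
      (by simp)).topologicalClosure_map_submodule (topologicalClosure_span_eq_top hΓ)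
    rw [Submodule.map_span] at h
    rw [← h, ← Set.image_comp]
    rfl
  have ortho : Submodule.span ℂ (toL2 μ '' (Γ : Set (charGroup X))) ≤ (ℂ ∙ f)ᗮ := by
    rw [Submodule.span_le]
    rintro _ ⟨χ, hχ, rfl⟩
    exact Submodule.mem_orthogonal_singleton_iff_inner_left.mpr (hf χ hχ)
  rw [← inner_self_eq_zero (𝕜 := ℂ), ← Submodule.mem_orthogonal_singleton_iff_inner_left]
  exact Submodule.topologicalClosure_minimal _ ortho (Submodule.isClosed_orthogonal _)
    (dense ▸ Submodule.mem_top)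

end L2

theorem eq_top_of_separatesPoints [IsTopologicalAddGroup X] [CompactSpace X]
    {Γ : Subgroup (charGroup X)} (hΓ : SeparatesPoints Γ) : Γ = ⊤ := by
  borelize X
  let μ : Measure X := Measure.addHaarMeasure ⊤
  have : IsProbabilityMeasure μ := ⟨Measure.addHaarMeasure_self (K₀ := ⊤)⟩
  have orthonormal := orthonormal_toL2 μ
  refine (Subgroup.eq_top_iff' Γ).mpr fun ψ => by_contra fun hψ => orthonormal.ne_zero ψ ?_
  refine eq_zero_of_inner_toL2_eq_zero μ hΓ fun χ hχ => orthonormal.inner_eq_zero ?_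
  rintro rfl
  exact hψ hχ

end charGroup

end Characters

section FourierCoefficients

lemma measurable_coe_circle : Measurable fun z : Circle => (z : ℂ) :=
  continuous_coe_circle.measurable

lemma memLp_coe_circle [MeasurableSpace X] (μ : Measure X) [IsFiniteMeasure μ] {b : X → Circle}
    (hb : Measurable b) (p : ENNReal) : MemLp (fun x => (b x : ℂ)) p μ :=
  MemLp.of_bound (measurable_coe_circle.comp hb).aestronglyMeasurable 1 <|
    ae_of_all _ fun x => (Circle.norm_coe (b x)).le

variable [AddCommGroup X] [TopologicalSpace X] [MeasurableSpace X]

namespace charGroup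

/-- The Fourier coefficient at the character `χ` of a circle-valued function on `X`. -/
def fourierCoeff (μ : Measure X) (b : X → Circle) (χ : charGroup X) : ℂ :=
  ∫ x, ((b x / χ.1 x : Circle) : ℂ) ∂μ

variable [BorelSpace X] [CompactSpace X] {μ : Measure X} {b : X → Circle}

lemma inner_toL2_toLp [IsFiniteMeasure μ] (hb : Measurable b) (χ : charGroup X) :
    inner ℂ (toL2 μ χ) ((memLp_coe_circle μ hb 2).toLp _) = fourierCoeff μ b χ := by
  rw [L2.inner_def]
  refine integral_congr_ae ?_
  filter_upwards [coeFn_toL2 μ χ, (memLp_coe_circle μ hb 2).coeFn_toLp] with x hχ hbx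
  rw [hχ, hbx, div_eq_mul_inv, Circle.coe_mul, Circle.coe_inv_eq_conj]
  rfl

variable [IsTopologicalAddGroup X] [IsProbabilityMeasure μ]

theorem finite_setOf_norm_fourierCoeff_eq [μ.IsAddLeftInvariant] (hb : Measurable b) {r : ℝ}
    (hr : 0 < r) : {χ | ‖fourierCoeff μ b χ‖ = r}.Finite := by
  have summable : Summable fun χ => ‖fourierCoeff μ b χ‖ ^ 2 := by
    simpa only [inner_toL2_toLp hb] using
      (orthonormal_toL2 μ).inner_products_summable ((memLp_coe_circle μ hb 2).toLp _)
  have eventually_lt := summable.tendsto_cofinite_zero.eventually_lt_const (pow_pos hr 2)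
  exact (Filter.eventually_cofinite.mp eventually_lt).subset fun χ hχ => by
    simp only [Set.mem_ofPred_eq] at hχ
    simp [hχ]

theorem exists_fourierCoeff_ne_zero [μ.WeaklyRegular]
    (hX : SeparatesPoints (⊤ : Subgroup (charGroup X))) (hb : Measurable b) :
    ∃ χ, fourierCoeff μ b χ ≠ 0 := by
  by_contra! h
  have toLp_eq_zero : (memLp_coe_circle μ hb 2).toLp _ = 0 :=
    eq_zero_of_inner_toL2_eq_zero μ hX fun χ _ => (inner_toL2_toLp hb χ).trans (h χ)
  have ae_zero : (fun x => (b x : ℂ)) =ᵐ[μ] 0 :=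
    (MemLp.coeFn_toLp (memLp_coe_circle μ hb 2)).symm.trans
      (Lp.eq_zero_iff_ae_eq_zero.mp toLp_eq_zero)
  obtain ⟨x, hx⟩ := ae_zero.exists
  exact Circle.coe_ne_zero (b x) hx

end charGroup

end FourierCoefficients

section AffineFixedPoint

variable {A : Type*} [CommGroup A] {ι : Type*}

/- The differences of points of an invariant finite set have finite orbits under the linear
parts, so the invariant set is a single point. -/
theorem exists_forall_map_div_eq_self {φ : ι → A →* A} {c : ι → A}
    (hφ : ∀ x, (Set.range fun i => φ i x).Finite → x = 1) {S : Set A} (hS : S.Finite)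
    (hne : S.Nonempty) (hmaps : ∀ i, ∀ x ∈ S, φ i x / c i ∈ S) :
    ∃ x, ∀ i, φ i x / c i = x := by
  have subsingleton : S.Subsingleton := by
    intro x hx y hy
    refine div_eq_one.mp (hφ _ ((hS.image2 (· / ·) hS).subset ?_))
    rintro _ ⟨i, rfl⟩
    exact ⟨_, hmaps i x hx, _, hmaps i y hy, by simp only [map_div, div_div_div_cancel_right]⟩
  obtain ⟨x, hx⟩ := hne
  exact ⟨x, fun i => subsingleton (hmaps i x hx) hx⟩

end AffineFixedPoint

section AlgebraicAction

variable [Group G] [AddCommGroup X] [TopologicalSpace X] {a : G → X → X}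

namespace IsAlgebraicAction

/-- The dual action of `G` on the characters of `X`, `(g • χ) x = χ (g⁻¹ • x)`. -/
def dual (ha : IsAlgebraicAction a) (g : G) : charGroup X →* charGroup X where
  toFun χ := ⟨fun x => χ.1 (a g⁻¹ x), χ.2.1.comp (ha.continuous g⁻¹), fun x y => by
    simp only [ha.act_add, χ.2.2]⟩
  map_one' := rfl
  map_mul' _ _ := rfl

@[simp]
lemma dual_apply (ha : IsAlgebraicAction a) (g : G) (χ : charGroup X) (x : X) :
    (ha.dual g χ).1 x = χ.1 (a g⁻¹ x) := rfl

lemma dual_one (ha : IsAlgebraicAction a) : ha.dual 1 = MonoidHom.id (charGroup X) := by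
  ext χ x
  simp only [dual_apply, inv_one, ha.act_one, MonoidHom.id_apply]

lemma dual_mul (ha : IsAlgebraicAction a) (g h : G) :
    ha.dual (g * h) = (ha.dual g).comp (ha.dual h) := by
  ext χ x
  simp only [dual_apply, mul_inv_rev, ha.act_mul, MonoidHom.comp_apply]

/-- The dual action, written additively, as a representation of `G`. -/
def dualRep (ha : IsAlgebraicAction a) : Representation ℤ G (Additive (charGroup X)) where
  toFun g := (ha.dual g).toAdditive.toIntLinearMap
  map_one' := by rw [dual_one]; rfl
  map_mul' g h := by rw [dual_mul]; rfl

@[simp]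
lemma dualRep_ofMul (ha : IsAlgebraicAction a) (g : G) (χ : charGroup X) :
    ha.dualRep g (Additive.ofMul χ) = Additive.ofMul (ha.dual g χ) := rfl

lemma mem_modB1_iff (ha : IsAlgebraicAction a) {c : G → charGroup X} :
    c ∈ modB1 a ↔ ∃ χ, ∀ g, c g = ha.dual g χ / χ := by
  simp only [Subtype.ext_iff, funext_iff, div_eq_mul_inv]
  rfl

variable [IsTopologicalAddGroup X] [CompactSpace X] [MeasurableSpace X] [BorelSpace X]
  {μ : Measure X}

lemma measurePreserving (ha : IsAlgebraicAction a) [μ.IsAddHaarMeasure] (g : G) :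
    MeasurePreserving (a g) μ μ :=
  (AddMonoidHom.mk' (a g) (ha.act_add g)).measurePreserving (ha.continuous g)
    (fun x => ⟨a g⁻¹ x, by simp [← ha.act_mul, ha.act_one]⟩) rfl

lemma fourierCoeff_dual_div (ha : IsAlgebraicAction a) [μ.IsAddHaarMeasure]
    {c : G → charGroup X} {b : X → Circle} (hb : Measurable b) {g : G} {z : Circle}
    (hc : ∀ᵐ x ∂μ, (c g).1 x = z * (b (a g⁻¹ x) * (b x)⁻¹)) (χ : charGroup X) :
    charGroup.fourierCoeff μ b (ha.dual g χ / c g) = z * charGroup.fourierCoeff μ b χ := by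
  have twist : ∀ᵐ x ∂μ, b x / (ha.dual g χ / c g).1 x = z * (b (a g⁻¹ x) / χ.1 (a g⁻¹ x)) := by
    filter_upwards [hc] with x hx
    have expand : (ha.dual g χ / c g).1 x = χ.1 (a g⁻¹ x) / (c g).1 x := rfl
    rw [expand, hx, div_div_eq_mul_div, mul_left_comm, mul_inv_cancel_comm_assoc, mul_div_assoc]
  have measurable : Measurable fun x => ((b x / χ.1 x : Circle) : ℂ) :=
    measurable_coe_circle.comp (hb.div χ.2.1.measurable)
  calc charGroup.fourierCoeff μ b (ha.dual g χ / c g)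
    _ = ∫ x, (z * ((b (a g⁻¹ x) / χ.1 (a g⁻¹ x) : Circle) : ℂ)) ∂μ :=
      integral_congr_ae (twist.mono fun x hx => by simp only [hx, Circle.coe_mul])
    _ = z * ∫ x, ((b (a g⁻¹ x) / χ.1 (a g⁻¹ x) : Circle) : ℂ) ∂μ := integral_const_mul _ _
    _ = z * charGroup.fourierCoeff μ b χ := by
      rw [charGroup.fourierCoeff, ← integral_map (ha.measurePreserving g⁻¹).aemeasurable
        measurable.aestronglyMeasurable, (ha.measurePreserving g⁻¹).map_eq]

theorem mem_modB1_of_ind1_mem_measBPsi1 (ha : IsAlgebraicAction a) [μ.IsAddHaarMeasure]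
    [IsProbabilityMeasure μ] [μ.WeaklyRegular]
    (hX : charGroup.SeparatesPoints (⊤ : Subgroup (charGroup X)))
    (horbit : ∀ χ, (Set.range fun g => ha.dual g χ).Finite → χ = 1) {c : G → charGroup X}
    (hc : ind1 c ∈ measBPsi1 a μ) : c ∈ modB1 a := by
  obtain ⟨lam, b, hb, hcb⟩ := hc
  obtain ⟨χ₀, hχ₀⟩ := charGroup.exists_fourierCoeff_ne_zero (μ := μ) hX hb
  obtain ⟨χ, hχ⟩ := exists_forall_map_div_eq_self (φ := fun g => ha.dual g) (c := c) horbit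
    (charGroup.finite_setOf_norm_fourierCoeff_eq hb (norm_pos_iff.mpr hχ₀)) ⟨χ₀, rfl⟩
    fun g χ hχ => by
      rw [Set.mem_ofPred_eq, ha.fourierCoeff_dual_div hb (hcb g), norm_mul, Circle.norm_coe,
        one_mul, hχ]
  exact ha.mem_modB1_iff.mpr ⟨χ, fun g => (div_eq_iff_comm.mp (hχ g)).symm⟩

theorem modZ1_le_modB1_of_isCocycleSuperrigid (ha : IsAlgebraicAction a) [μ.IsAddHaarMeasure]
    [IsProbabilityMeasure μ] [μ.WeaklyRegular]
    (hX : charGroup.SeparatesPoints (⊤ : Subgroup (charGroup X)))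
    (horbit : ∀ χ, (Set.range fun g => ha.dual g χ).Finite → χ = 1)
    (hsuper : IsCocycleSuperrigid a μ) : modZ1 a ≤ modB1 a := fun c hc =>
  ha.mem_modB1_of_ind1_mem_measBPsi1 hX horbit <| hsuper (ind1 c)
    ⟨fun g => (c g).2.1.measurable, fun g h => ae_of_all _ fun x => by
      simp only [ind1, hc g h x, mul_comm]⟩

end IsAlgebraicAction

end AlgebraicAction

section Cohomology

universe u

open CategoryTheory

theorem injective_map_functor_of_subsingleton {k G : Type u} [CommRing k] [Group G]
    {S : ShortComplex (Rep k G)} (hS : S.ShortExact) {i j : ℕ} (hij : i + 1 = j)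
    [Subsingleton (groupCohomology S.X₃ i)] :
    Function.Injective ((groupCohomology.functor k G j).map S.f) := by
  have δ_eq_zero : groupCohomology.δ hS i j hij = 0 := by
    ext x
    rw [Subsingleton.elim x 0, map_zero, map_zero]
  exact (ModuleCat.mono_iff_injective _).mp
    ((groupCohomology.mapShortComplex₁_exact hS hij).mono_g δ_eq_zero)

lemma map_functor_nsmul_id_apply {k G : Type u} [CommRing k] [Group G] (A : Rep k G) (i n : ℕ)
    (x : groupCohomology A i) :
    ((groupCohomology.functor k G i).map (n • 𝟙 A)).hom x = n • x := by
  have map_nsmul_id :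
      (groupCohomology.cochainsFunctor k G ⋙ HomologicalComplex.homologyFunctor _ _ i).map
        (n • 𝟙 A) = n • 𝟙 (groupCohomology A i) := by
    rw [Functor.map_nsmul, CategoryTheory.Functor.map_id]
    rfl
  exact congrArg (fun f => f.hom x) map_nsmul_id

lemma shortExact_of_exact {k G : Type u} [CommRing k] [Group G] (S : ShortComplex (Rep k G))
    (hf : Function.Injective S.f) (hfg : Function.Exact S.f S.g) (hg : Function.Surjective S.g) :
    S.ShortExact := by
  have : Mono S.f := (Rep.mono_iff_injective S.f).mpr hf
  have : Epi S.g := (Rep.epi_iff_surjective S.g).mpr hg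
  have exact : (S.map (forget₂ (Rep k G) (ModuleCat k))).Exact :=
    (ShortComplex.ShortExact.moduleCat_exact_iff_function_exact _).mpr hfg
  exact ⟨(ShortComplex.exact_map_iff_of_faithful S (forget₂ (Rep k G) (ModuleCat k))).mp exact⟩

theorem eq_zero_of_nsmul_eq_zero_of_exact {k G : Type u} [CommRing k] [Group G] {A B : Rep k G}
    {n : ℕ} {π : A ⟶ B} (hn : Function.Injective fun v : A => n • v)
    (hnπ : Function.Exact (fun v : A => n • v) π) (hπ : Function.Surjective π) {i j : ℕ}
    (hij : i + 1 = j) [Subsingleton (groupCohomology B i)] {x : groupCohomology A j}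
    (hx : n • x = 0) : x = 0 := by
  have comp_eq_zero : (n • 𝟙 A) ≫ π = 0 := by
    ext v
    exact hnπ.apply_apply_eq_zero v
  have shortExact := shortExact_of_exact (ShortComplex.mk (n • 𝟙 A) π comp_eq_zero) hn hnπ hπ
  exact (injective_iff_map_eq_zero _).mp (injective_map_functor_of_subsingleton shortExact hij) x
    ((map_functor_nsmul_id_apply A j n x).trans hx)

theorem subsingleton_H1_dualRep {G X : Type} [Group G] [AddCommGroup X] [TopologicalSpace X]
    {a : G → X → X} (ha : IsAlgebraicAction a) (h : modZ1 a ≤ modB1 a) :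
    Subsingleton (groupCohomology.H1 (Rep.of ha.dualRep)) := by
  refine subsingleton_of_forall_eq 0 fun x => ?_
  induction x using groupCohomology.H1_induction_on with | h c => ?_
  have hc : (fun g => (c g).toMul) ∈ modZ1 a := fun g h x =>
    congrArg (fun χ : Additive (charGroup X) => χ.toMul.1 x)
      ((groupCohomology.mem_cocycles₁_iff c.1).mp c.2 g h)
  obtain ⟨χ, hχ⟩ := ha.mem_modB1_iff.mp (h hc)
  exact (groupCohomology.H1π_eq_zero_iff c).mpr
    ⟨Additive.ofMul χ, funext fun g => congrArg Additive.ofMul (hχ g).symm⟩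

end Cohomology

section BernoulliMeasure

variable {ι X₀ : Type*} [MeasurableSpace X₀] (μ₀ : Measure X₀) [IsProbabilityMeasure μ₀]

lemma isBernoulliMeasure_infinitePi : IsBernoulliMeasure μ₀ (Measure.infinitePi fun _ : ι => μ₀) :=
  fun s _ ht => Measure.infinitePi_pi (fun _ : ι => μ₀) fun i (_ : i ∈ s) => ht i

variable [AddCommGroup X₀]

lemma isAddLeftInvariant_infinitePi [MeasurableAdd X₀] [μ₀.IsAddLeftInvariant] :
    (Measure.infinitePi fun _ : ι => μ₀).IsAddLeftInvariant where
  map_add_left_eq_self y := by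
    have map_pi := Measure.infinitePi_map_pi (μ := fun _ : ι => μ₀) (f := fun i x => y i + x)
      fun i => measurable_const_add (y i)
    simp only [map_add_left_eq_self] at map_pi
    exact map_pi

variable [TopologicalSpace X₀]

lemma isAddHaarMeasure_infinitePi [Countable ι] [IsTopologicalAddGroup X₀] [CompactSpace X₀]
    [SecondCountableTopology X₀] [BorelSpace X₀] [μ₀.IsAddLeftInvariant] :
    (Measure.infinitePi fun _ : ι => μ₀).IsAddHaarMeasure := by
  have := isAddLeftInvariant_infinitePi (ι := ι) μ₀
  exact Measure.isAddHaarMeasure_of_isCompact_nonempty_interior _ Set.univ isCompact_univ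
    (by simp) (by simp) (by simp)

end BernoulliMeasure

section BernoulliShift

variable (G : Type*) {X₀ : Type*} [Group G]

lemma isAlgebraicAction_bernoulliShift [AddCommGroup X₀] [TopologicalSpace X₀] :
    IsAlgebraicAction (bernoulliShift G X₀) where
  act_one x := funext fun h => by rw [bernoulliShift, inv_one, one_mul]
  act_mul g h x := funext fun k => by simp only [bernoulliShift, mul_inv_rev, mul_assoc]
  continuous g := continuous_pi fun h => continuous_apply (g⁻¹ * h)
  act_add _ _ _ := rfl

variable {G}

lemma bernoulliShift_single [DecidableEq G] [Zero X₀] (g h : G) (x : X₀) :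
    bernoulliShift G X₀ g (Pi.single h x) = Pi.single (g * h) x := by
  ext k
  simp only [bernoulliShift, Pi.single_apply, inv_mul_eq_iff_eq_mul]

end BernoulliShift

section FinsuppCharacters

variable {ι : Type*} {n : ℕ} [NeZero n]

/-- The `i`-th coordinate of `(ℤ/n)^ι`, as a character through the standard embedding of `ℤ/n`
in the circle. -/
def coordChar (n : ℕ) [NeZero n] (i : ι) : charGroup (ι → ZMod n) :=
  ⟨fun x => ZMod.toCircle (x i), continuous_of_discreteTopology.comp (continuous_apply i),
    fun x y => by simp only [Pi.add_apply, AddChar.map_add_eq_mul]⟩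

/-- The homomorphism from `ℤ^(ι)` to the characters of `(ℤ/n)^ι` which sends the `i`-th basis
vector to the `i`-th coordinate character. -/
def charOfFinsupp (n : ℕ) [NeZero n] : (ι →₀ ℤ) →ₗ[ℤ] Additive (charGroup (ι → ZMod n)) :=
  Finsupp.linearCombination ℤ fun i => Additive.ofMul (coordChar n i)

lemma charOfFinsupp_single_one (i : ι) :
    charOfFinsupp n (Finsupp.single i 1) = Additive.ofMul (coordChar n i) := by
  rw [charOfFinsupp, Finsupp.linearCombination_single, one_smul]

lemma charOfFinsupp_apply (f : ι →₀ ℤ) (x : ι → ZMod n) :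
    (charOfFinsupp n f).toMul.1 x = ZMod.toCircle (Finsupp.linearCombination ℤ x f) := by
  let evalHom : Additive (charGroup (ι → ZMod n)) →+ Additive Circle :=
    ((Pi.evalMonoidHom _ x).comp (charGroup (ι → ZMod n)).subtype).toAdditive
  have eval_coordChar (i : ι) :
      evalHom (Additive.ofMul (coordChar n i)) = Additive.ofMul (ZMod.toCircle (x i)) := rfl
  have eval_eq : evalHom.toIntLinearMap ∘ₗ charOfFinsupp n =
      (ZMod.toCircle (N := n)).toAddMonoidHom.toIntLinearMap ∘ₗ Finsupp.linearCombination ℤ x :=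
    Finsupp.lhom_ext' fun i => LinearMap.ext_ring (by
      simp [charOfFinsupp_single_one, eval_coordChar])
  exact congrArg Additive.toMul (LinearMap.congr_fun eval_eq f)

lemma charOfFinsupp_apply_single_eq_one_iff [DecidableEq ι] {f : ι →₀ ℤ} {i : ι} :
    (charOfFinsupp n f).toMul.1 (Pi.single i 1) = 1 ↔ (n : ℤ) ∣ f i := by
  have coeff : Finsupp.linearCombination ℤ (Pi.single i (1 : ZMod n)) f = (f i : ZMod n) := by
    rw [Finsupp.linearCombination_apply, Finsupp.sum, Finset.sum_eq_single i]
    · simp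
    · intro j _ hj
      simp [hj]
    · intro hi
      simp [Finsupp.notMem_support_iff.mp hi]
  rw [charOfFinsupp_apply, coeff, ← (ZMod.toCircle (N := n)).map_zero_eq_one,
    ZMod.injective_toCircle.eq_iff, ZMod.intCast_zmod_eq_zero_iff_dvd]

theorem charOfFinsupp_eq_zero_iff {f : ι →₀ ℤ} :
    charOfFinsupp n f = 0 ↔ ∀ i, (n : ℤ) ∣ f i := by
  classical
  refine ⟨fun h i => charOfFinsupp_apply_single_eq_one_iff.mp (by rw [h]; rfl), fun h => ?_⟩
  refine Additive.toMul.injective (Subtype.ext (funext fun x => ?_))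
  have comb_eq_zero : Finsupp.linearCombination ℤ x f = 0 := by
    refine Finset.sum_eq_zero fun i _ => ?_
    change f i • x i = 0
    rw [zsmul_eq_mul, (ZMod.intCast_zmod_eq_zero_iff_dvd _ _).mpr (h i), zero_mul]
  rw [charOfFinsupp_apply, comb_eq_zero, AddChar.map_zero_eq_one]
  rfl

lemma separatesPoints_of_coordChar_mem {Γ : Subgroup (charGroup (ι → ZMod n))}
    (hΓ : ∀ i, coordChar n i ∈ Γ) : charGroup.SeparatesPoints Γ := by
  intro x y hxy
  obtain ⟨i, hi⟩ := Function.ne_iff.mp hxy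
  exact ⟨_, ⟨_, hΓ i, rfl⟩, ZMod.injective_toCircle.ne hi⟩

theorem charOfFinsupp_surjective : Function.Surjective (charOfFinsupp (ι := ι) n) := by
  let Γ := (AddMonoidHom.toMultiplicativeLeft (charOfFinsupp (ι := ι) n).toAddMonoidHom).range
  have hΓ : Γ = ⊤ := charGroup.eq_top_of_separatesPoints <|
    separatesPoints_of_coordChar_mem fun i =>
      ⟨Multiplicative.ofAdd (Finsupp.single i 1), charOfFinsupp_single_one i⟩
  exact MonoidHom.range_eq_top.mp hΓ

lemma finite_setOf_apply_single_ne_one [DecidableEq ι] (χ : charGroup (ι → ZMod n)) :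
    {i | χ.1 (Pi.single i 1) ≠ 1}.Finite := by
  obtain ⟨f, rfl⟩ := (Additive.toMul.surjective.comp charOfFinsupp_surjective) χ
  refine f.hasFiniteSupport.subset fun i hi h => hi ?_
  exact charOfFinsupp_apply_single_eq_one_iff.mpr (h ▸ dvd_zero _)

lemma eq_one_of_apply_single_eq_one [DecidableEq ι] {χ : charGroup (ι → ZMod n)}
    (hχ : ∀ i, χ.1 (Pi.single i 1) = 1) : χ = 1 := by
  obtain ⟨f, rfl⟩ := (Additive.toMul.surjective.comp charOfFinsupp_surjective) χ
  exact congrArg Additive.toMul <|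
    charOfFinsupp_eq_zero_iff.mpr fun i => charOfFinsupp_apply_single_eq_one_iff.mp (hχ i)

theorem eq_one_of_finite_range_dual_bernoulliShift {G : Type*} [Group G] [Infinite G]
    {χ : charGroup (G → ZMod n)}
    (hχ : (Set.range fun g => (isAlgebraicAction_bernoulliShift G).dual g χ).Finite) :
    χ = 1 := by
  classical
  refine eq_one_of_apply_single_eq_one fun h => by_contra fun hne => ?_
  have finite_union := hχ.biUnion fun ψ _ => finite_setOf_apply_single_ne_one ψ
  refine Set.infinite_univ (finite_union.subset fun k _ => ?_)
  refine Set.mem_biUnion ⟨k * h⁻¹, rfl⟩ ?_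
  rwa [Set.mem_ofPred_eq, IsAlgebraicAction.dual_apply, bernoulliShift_single, mul_inv_rev, inv_inv,
    inv_mul_cancel_right]

end FinsuppCharacters

section GroupRing

open CategoryTheory

section BernoulliDual

variable {G : Type*} [Group G] (n : ℕ) [NeZero n]

lemma dual_bernoulliShift_coordChar (g h : G) :
    (isAlgebraicAction_bernoulliShift G).dual g (coordChar n h) = coordChar n (g * h) := by
  ext x
  simp [coordChar, bernoulliShift]

lemma charOfFinsupp_comp_lmapDomain (g : G) :
    charOfFinsupp n ∘ₗ Finsupp.lmapDomain ℤ ℤ (g * ·) =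
      (isAlgebraicAction_bernoulliShift G).dualRep g ∘ₗ charOfFinsupp n :=
  Finsupp.lhom_ext' fun h => LinearMap.ext_ring (by
    simp [charOfFinsupp_single_one, dual_bernoulliShift_coordChar])

end BernoulliDual

variable {G : Type} [Group G] (n : ℕ) [NeZero n]

/-- The projection of `ℤG` onto the dual of the Bernoulli shift with base `ℤ/n`, which sends
`g` to the `g`-th coordinate character. -/
def groupRingToDual : Rep.ofMulAction ℤ G G ⟶
    Rep.of (isAlgebraicAction_bernoulliShift (X₀ := ZMod n) G).dualRep :=
  Rep.ofHom ⟨charOfFinsupp n ∘ₗ (MonoidAlgebra.coeffLinearEquiv ℤ).toLinearMap, fun g => by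
    rw [← LinearMap.comp_assoc, ← charOfFinsupp_comp_lmapDomain]
    rfl⟩

lemma groupRingToDual_apply (f : MonoidAlgebra ℤ G) :
    groupRingToDual n f = charOfFinsupp n f.coeff := rfl

lemma groupRingToDual_surjective : Function.Surjective (groupRingToDual (G := G) n) :=
  charOfFinsupp_surjective.comp (MonoidAlgebra.coeffLinearEquiv ℤ).surjective

lemma exact_nsmul_groupRingToDual :
    Function.Exact (fun f : MonoidAlgebra ℤ G => n • f) (groupRingToDual n) := by
  intro f
  rw [groupRingToDual_apply, charOfFinsupp_eq_zero_iff]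
  constructor
  · intro h
    refine ⟨MonoidAlgebra.ofCoeff (f.coeff.mapRange (· / (n : ℤ)) (Int.zero_ediv _)), ?_⟩
    ext g
    rw [MonoidAlgebra.coeff_smul, Finsupp.smul_apply, nsmul_eq_mul]
    exact Int.mul_ediv_cancel' (h g)
  · rintro ⟨f', rfl⟩ g
    rw [MonoidAlgebra.coeff_smul, Finsupp.smul_apply, nsmul_eq_mul]
    exact dvd_mul_right _ _

theorem eq_zero_of_nsmul_eq_zero_of_isCocycleSuperrigid [Countable G] [Infinite G]
    (μ₀ : Measure (ZMod n)) [IsProbabilityMeasure μ₀] [μ₀.IsAddLeftInvariant]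
    (hsuper : IsCocycleSuperrigid (bernoulliShift G (ZMod n)) (Measure.infinitePi fun _ => μ₀))
    {x : groupCohomology.H2 (Rep.ofMulAction ℤ G G)} (hx : n • x = 0) : x = 0 := by
  have := isAddHaarMeasure_infinitePi (ι := G) μ₀
  have separates : charGroup.SeparatesPoints (⊤ : Subgroup (charGroup (G → ZMod n))) :=
    separatesPoints_of_coordChar_mem fun i => Subgroup.mem_top (coordChar n i)
  let ha := isAlgebraicAction_bernoulliShift (X₀ := ZMod n) G
  have := subsingleton_H1_dualRep ha <| ha.modZ1_le_modB1_of_isCocycleSuperrigid separates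
    (fun _ => eq_one_of_finite_range_dual_bernoulliShift) hsuper
  exact eq_zero_of_nsmul_eq_zero_of_exact
    (smul_right_injective (MonoidAlgebra ℤ G) (NeZero.ne n))
    (exact_nsmul_groupRingToDual n) (groupRingToDual_surjective n) rfl hx

end GroupRing

/-- If all Bernoulli shifts of the countable infinite group `G` over
standard probability spaces are `𝕋`-cocycle superrigid (i.e. `G` belongs to Popa's
class `𝒢`, e.g. if `G` has property (T)), then `H²(G, ℤG)` is torsion free as an
abelian group.  Here `ℤG` is the integral group ring, i.e. the left regular
representation `Rep.ofMulAction ℤ G G`. -/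
theorem h2_zg_torsionFree_of_bernoulli_superrigid
    (G : Type) [Group G] [Countable G] [Infinite G] (hG : InClassG G) :
    ∀ (x : groupCohomology.H2 (Rep.ofMulAction ℤ G G)) (n : ℕ), n ≠ 0 → n • x = 0 → x = 0 := by
  intro x n hn hx
  have : NeZero n := ⟨hn⟩
  let μ₀ : Measure (ZMod n) := Measure.addHaarMeasure ⊤
  have : IsProbabilityMeasure μ₀ := ⟨Measure.addHaarMeasure_self (K₀ := ⊤)⟩
  exact eq_zero_of_nsmul_eq_zero_of_isCocycleSuperrigid n μ₀
    (hG (ZMod n) μ₀ _ (isBernoulliMeasure_infinitePi μ₀)) hx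

end AlgActCohomology
end
end

section
/- Let G be a countable infinite discrete group such that for every standard probability space (X₀, μ₀) the Bernoulli shift G ↷ (X₀^G, μ₀^G) is 𝕋-cocycle superrigid (G ∈ 𝒢). Consider the Bernoulli shift G ↷ (𝕋^G, ν^G), where ν is the Haar measure on 𝕋. If the natural map Ψ₁ : H¹(G, 𝕋) → H¹(G ↷ 𝕋^G; 𝕋) is surjective (i.e., H¹(G ↷ 𝕋^G; 𝕋) = H¹(G, 𝕋)), then H¹(G, ℤG) = 0. -/
open MeasureTheory

noncomputable section

namespace AlgActCohomology

variable {G X : Type*}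

/-!
A cocycle `c : G → ℤG` defines, through the duality between `ℤG` and `𝕋^G`, a `𝕋`-valued cocycle
of the shift, so by superrigidity `c g = λ g · (b ∘ g⁻¹) / b` as functions on `𝕋^G`. Hence, for
all `g ∈ G` and `m ∈ ℤG`, the Fourier coefficients of `b` at `g • m - c g` and at `m` have the same
modulus. Choose `m` for which it is nonzero; as the coefficients are square-summable, `g • m - c g`
takes only finitely many values. So `c` is cohomologous to a cocycle with finite range, and such a
cocycle is a coboundary.
-/

section CompactGroup

open scoped ComplexConjugate

theorem integral_monoidHom_circle_eq_zero [Group X] [MeasurableSpace X] [MeasurableMul X]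
    {μ : Measure X} [μ.IsMulLeftInvariant] {χ : X →* Circle} (hχ : χ ≠ 1) :
    ∫ x, (χ x : ℂ) ∂μ = 0 := by
  obtain ⟨y, hy⟩ : ∃ y, χ y ≠ 1 := by simpa [MonoidHom.ext_iff] using hχ
  have hinv : (χ y : ℂ) * ∫ x, (χ x : ℂ) ∂μ = ∫ x, (χ x : ℂ) ∂μ := by
    simpa [integral_const_mul] using integral_mul_left_eq_self (μ := μ) (fun x => (χ x : ℂ)) y
  by_contra h
  exact hy (Circle.coe_eq_one.1 ((mul_eq_right₀ h).1 hinv))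

section Monoid

variable [Monoid X] [TopologicalSpace X]

/-- A continuous character `X → 𝕋` as an element of the algebra `C(X, ℂ)`. -/
def characterMap : PontryaginDual X →* C(X, ℂ) where
  toFun χ := ⟨fun x => χ x, by fun_prop⟩
  map_one' := by ext; simp
  map_mul' χ ψ := by ext; exact Circle.coe_mul _ _

@[simp]
theorem characterMap_apply (χ : PontryaginDual X) (x : X) : characterMap χ x = χ x := rfl

theorem star_characterMap (χ : PontryaginDual X) : star (characterMap χ) = characterMap χ⁻¹ := by
  ext x
  exact (Circle.coe_inv_eq_conj (χ x)).symm

theorem topologicalClosure_span_characterMap_eq_top [CompactSpace X]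
    {Γ : Subgroup (PontryaginDual X)} (hΓ : ∀ x y : X, x ≠ y → ∃ χ ∈ Γ, χ x ≠ χ y) :
    (Submodule.span ℂ (characterMap '' (Γ : Set (PontryaginDual X)))).topologicalClosure = ⊤ := by
  set S := characterMap '' (Γ : Set (PontryaginDual X))
  have hstar : star S ⊆ S := by
    rintro f ⟨χ, hχ, hf⟩
    refine ⟨χ⁻¹, Γ.inv_mem hχ, ?_⟩
    rw [← star_characterMap, hf, star_star]
  have hspan : Subalgebra.toSubmodule (StarAlgebra.adjoin ℂ S).toSubalgebra
      = Submodule.span ℂ S := by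
    have hS : (Submonoid.closure S : Set C(X, ℂ)) = S :=
      congrArg SetLike.coe (Γ.toSubmonoid.map characterMap).closure_eq
    rw [StarAlgebra.adjoin_toSubalgebra, Set.union_eq_left.2 hstar, Algebra.adjoin_eq_span, hS]
  have hsep : (StarAlgebra.adjoin ℂ S).SeparatesPoints := by
    intro x y hxy
    obtain ⟨χ, hχ, hne⟩ := hΓ x y hxy
    exact ⟨_, ⟨characterMap χ, StarAlgebra.subset_adjoin ℂ S ⟨χ, hχ, rfl⟩, rfl⟩,
      fun h => hne (Circle.ext h)⟩
  rw [← hspan]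
  exact congrArg (fun A => Subalgebra.toSubmodule A.toSubalgebra)
    (ContinuousMap.starSubalgebra_topologicalClosure_eq_top_of_separatesPoints _ hsep)

variable [MeasurableSpace X]

/-- The Fourier coefficient `∫ conj χ · f dμ` of `f` at the character `χ`. -/
def characterCoeff (μ : Measure X) (χ : PontryaginDual X) (f : X → ℂ) : ℂ :=
  ∫ x, conj (χ x : ℂ) * f x ∂μ

theorem characterCoeff_eq_mul_of_ae [OpensMeasurableSpace X] {μ : Measure X} {T : X → X}
    (hT : MeasurePreserving T μ μ) {b : X → Circle} (hb : Measurable b) {a : Circle}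
    {c : X → Circle} (hc : ∀ᵐ x ∂μ, c x = a * (b (T x) * (b x)⁻¹))
    {χ ψ : PontryaginDual X} (hψ : ∀ x, ψ x * c x = χ (T x)) :
    characterCoeff μ ψ (fun x => b x) = a * characterCoeff μ χ (fun x => b x) := by
  have hcoeff (φ : PontryaginDual X) :
      characterCoeff μ φ (fun x => b x) = ∫ x, (((φ x)⁻¹ * b x : Circle) : ℂ) ∂μ := by
    simp only [characterCoeff, Circle.coe_mul, Circle.coe_inv_eq_conj]
  have hcomp : ∫ x, (((χ (T x))⁻¹ * b (T x) : Circle) : ℂ) ∂μ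
      = ∫ x, (((χ x)⁻¹ * b x : Circle) : ℂ) ∂μ := by
    conv_rhs => rw [← hT.map_eq]
    exact (integral_map (f := fun x => (((χ x)⁻¹ * b x : Circle) : ℂ))
      hT.measurable.aemeasurable (by fun_prop)).symm
  have hpoint (x : X) (hx : c x = a * (b (T x) * (b x)⁻¹)) :
      (ψ x)⁻¹ * b x = a * ((χ (T x))⁻¹ * b (T x)) := by
    rw [← hψ x, hx, inv_mul_eq_iff_eq_mul]
    simp [mul_assoc, mul_left_comm]
  calc characterCoeff μ ψ (fun x => b x)
      = ∫ x, (a : ℂ) * (((χ (T x))⁻¹ * b (T x) : Circle) : ℂ) ∂μ := by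
        rw [hcoeff]
        refine integral_congr_ae ?_
        filter_upwards [hc] with x hx
        rw [← Circle.coe_mul, hpoint x hx]
    _ = a * characterCoeff μ χ (fun x => b x) := by rw [integral_const_mul, hcomp, hcoeff]

variable [CompactSpace X] [BorelSpace X]

/-- A continuous character `X → 𝕋` as an element of `L²(X, μ)`. -/
def characterLp (μ : Measure X) [IsFiniteMeasure μ] (χ : PontryaginDual X) : Lp ℂ 2 μ :=
  ContinuousMap.toLp 2 μ ℂ (characterMap χ)

theorem inner_characterLp_toLp {μ : Measure X} [IsFiniteMeasure μ] (χ : PontryaginDual X)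
    {f : X → ℂ} (hf : MemLp f 2 μ) :
    inner ℂ (characterLp μ χ) hf.toLp = characterCoeff μ χ f := by
  rw [L2.inner_def]
  refine integral_congr_ae ?_
  filter_upwards [hf.coeFn_toLp, ContinuousMap.coeFn_toLp (p := 2) (𝕜 := ℂ) μ (characterMap χ)]
    with x hfx hχx
  simp only [characterLp, hfx, hχx, characterMap_apply, RCLike.inner_apply, mul_comm]

theorem topologicalClosure_span_characterLp_eq_top [NormalSpace X] (μ : Measure X)
    [IsFiniteMeasure μ] [μ.WeaklyRegular] {Γ : Subgroup (PontryaginDual X)}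
    (hΓ : ∀ x y : X, x ≠ y → ∃ χ ∈ Γ, χ x ≠ χ y) :
    (Submodule.span ℂ (characterLp μ '' (Γ : Set (PontryaginDual X)))).topologicalClosure = ⊤ := by
  have h := (ContinuousMap.toLp_denseRange ℂ μ ℂ (p := 2)
    (by simp)).topologicalClosure_map_submodule (topologicalClosure_span_characterMap_eq_top hΓ)
  rw [Submodule.map_span, Set.image_image] at h
  exact h

theorem exists_characterCoeff_ne_zero [NormalSpace X] {μ : Measure X}
    [IsFiniteMeasure μ] [μ.WeaklyRegular] {Γ : Subgroup (PontryaginDual X)}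
    (hΓ : ∀ x y : X, x ≠ y → ∃ χ ∈ Γ, χ x ≠ χ y) {f : X → ℂ} (hf : MemLp f 2 μ)
    (hf0 : ¬ f =ᵐ[μ] 0) : ∃ χ ∈ Γ, characterCoeff μ χ f ≠ 0 := by
  contrapose! hf0
  have horth : hf.toLp ∈ (Submodule.span ℂ (characterLp μ '' (Γ : Set (PontryaginDual X))))ᗮ := by
    refine (Submodule.mem_orthogonal _ _).2 fun u hu =>
      Submodule.mem_orthogonal_singleton_iff_inner_left.1 (Submodule.span_le.2 ?_ hu)
    rintro _ ⟨χ, hχ, rfl⟩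
    rw [SetLike.mem_coe, Submodule.mem_orthogonal_singleton_iff_inner_left,
      inner_characterLp_toLp, hf0 χ hχ]
  rw [Submodule.topologicalClosure_eq_top_iff.1 (topologicalClosure_span_characterLp_eq_top μ hΓ),
    Submodule.mem_bot] at horth
  exact hf.coeFn_toLp.symm.trans ((Lp.eq_zero_iff_ae_eq_zero).1 horth)

end Monoid

variable [Group X] [TopologicalSpace X] [CompactSpace X] [MeasurableSpace X] [BorelSpace X]
  [ContinuousMul X]

theorem orthonormal_characterLp (μ : Measure X) [IsProbabilityMeasure μ] [μ.IsMulLeftInvariant] :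
    Orthonormal ℂ (characterLp μ) := by
  classical
  rw [orthonormal_iff_ite]
  intro χ ψ
  have hinner : inner ℂ (characterLp μ χ) (characterLp μ ψ)
      = ∫ x, (((χ⁻¹ * ψ : PontryaginDual X) : X →* Circle) x : ℂ) ∂μ := by
    refine (ContinuousMap.inner_toLp μ _ _).trans (integral_congr_ae (ae_of_all _ fun x => ?_))
    change (ψ x : ℂ) * conj (χ x : ℂ) = ((χ x)⁻¹ * ψ x : Circle)
    rw [Circle.coe_mul, Circle.coe_inv_eq_conj, mul_comm]
  rw [hinner]
  split_ifs with h
  · subst h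
    simp
  · refine integral_monoidHom_circle_eq_zero fun hone => h (inv_mul_eq_one.1 ?_)
    exact ContinuousMonoidHom.toMonoidHom_injective hone

theorem finite_setOf_le_norm_characterCoeff {μ : Measure X} [IsProbabilityMeasure μ]
    [μ.IsMulLeftInvariant] {f : X → ℂ} (hf : MemLp f 2 μ) {ε : ℝ} (hε : 0 < ε) :
    {χ : PontryaginDual X | ε ≤ ‖characterCoeff μ χ f‖}.Finite := by
  have hlim := ((orthonormal_characterLp μ).inner_products_summable hf.toLp).tendsto_cofinite_zero
  have hlt := hlim.eventually (gt_mem_nhds (pow_pos hε 2))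
  refine (Filter.eventually_cofinite.1 hlt).subset fun χ hχ => ?_
  rw [Set.mem_ofPred_eq] at hχ
  simp only [inner_characterLp_toLp, Set.mem_ofPred_eq, not_lt]
  gcongr

theorem exists_finite_setOf_character_mul_eq_comp [NormalSpace X] {μ : Measure X}
    [IsProbabilityMeasure μ] [μ.IsMulLeftInvariant] [μ.WeaklyRegular]
    {Γ : Subgroup (PontryaginDual X)} (hΓ : ∀ x y : X, x ≠ y → ∃ χ ∈ Γ, χ x ≠ χ y)
    {ι : Type*} {T : ι → X → X} (hT : ∀ i, MeasurePreserving (T i) μ μ)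
    {b : X → Circle} (hb : Measurable b) {a : ι → Circle} {c : ι → X → Circle}
    (hc : ∀ i, ∀ᵐ x ∂μ, c i x = a i * (b (T i x) * (b x)⁻¹)) :
    ∃ χ ∈ Γ, {ψ : PontryaginDual X | ∃ i, ∀ x, ψ x * c i x = χ (T i x)}.Finite := by
  have hbL : MemLp (fun x => (b x : ℂ)) 2 μ :=
    .of_bound (by fun_prop) 1 (ae_of_all _ fun x => (Circle.norm_coe (b x)).le)
  have hb0 : ¬ (fun x => (b x : ℂ)) =ᵐ[μ] 0 := fun h => by
    obtain ⟨x, hx⟩ := h.exists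
    exact Circle.coe_ne_zero (b x) hx
  obtain ⟨χ, hχ, hcoeff⟩ := exists_characterCoeff_ne_zero hΓ hbL hb0
  refine ⟨χ, hχ, (finite_setOf_le_norm_characterCoeff hbL (norm_pos_iff.2 hcoeff)).subset ?_⟩
  rintro ψ ⟨i, hψ⟩
  rw [Set.mem_ofPred_eq, characterCoeff_eq_mul_of_ae (hT i) hb (hc i) hψ, norm_mul,
    Circle.norm_coe, one_mul]

end CompactGroup

section TorusCharacter

variable {ι : Type*}

/-- The character `x ↦ ∏ᵢ xᵢ ^ mᵢ` of the torus `𝕋^ι` attached to `m : ι →₀ ℤ`. -/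
def torusCharacter (ι : Type*) : Multiplicative (ι →₀ ℤ) →* PontryaginDual (ι → Circle) where
  toFun m :=
    { toFun := fun x => m.toAdd.prod fun i n => x i ^ n
      map_one' := by simp
      map_mul' := fun x y => by simp [mul_zpow, Finsupp.prod_mul]
      continuous_toFun := continuous_finsetProd _ fun i _ => (continuous_apply i).zpow _ }
  map_one' := rfl
  map_mul' m n := by
    refine DFunLike.ext _ _ fun x => ?_
    exact Finsupp.prod_add_index' (fun i => zpow_zero _) (fun i => zpow_add _)

theorem torusCharacter_ofAdd_apply (m : ι →₀ ℤ) (x : ι → Circle) :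
    torusCharacter ι (.ofAdd m) x = m.prod fun i n => x i ^ n := rfl

theorem torusCharacter_ofAdd_single_one (i : ι) (x : ι → Circle) :
    torusCharacter ι (.ofAdd (Finsupp.single i 1)) x = x i := by
  simp [torusCharacter_ofAdd_apply]

theorem torusCharacter_ofAdd_mulSingle [DecidableEq ι] (m : ι →₀ ℤ) (i : ι) (z : Circle) :
    torusCharacter ι (.ofAdd m) (Pi.mulSingle i z) = z ^ m i := by
  rw [torusCharacter_ofAdd_apply, Finsupp.prod_eq_single i]
  · simp
  · intro j _ hj
    simp [hj]
  · simp

theorem exists_circle_zpow_ne_one {n : ℤ} (hn : n ≠ 0) : ∃ z : Circle, z ^ n ≠ 1 := by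
  refine ⟨Circle.exp (Real.pi / n), ?_⟩
  rw [← Circle.exp_zsmul, zsmul_eq_mul, mul_div_cancel₀ _ (Int.cast_ne_zero.2 hn)]
  exact Circle.exp_pi_ne_one

theorem torusCharacter_injective : Function.Injective (torusCharacter ι) := by
  classical
  refine (injective_iff_map_eq_one _).2 fun m hm => ?_
  by_contra hm0
  obtain ⟨i, hi⟩ := DFunLike.ne_iff.1 (fun h : m.toAdd = 0 => hm0 h)
  obtain ⟨z, hz⟩ := exists_circle_zpow_ne_one hi
  exact hz ((torusCharacter_ofAdd_mulSingle m.toAdd i z).symm.trans (DFunLike.congr_fun hm _))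

theorem exists_mem_range_torusCharacter_apply_ne {x y : ι → Circle} (hxy : x ≠ y) :
    ∃ χ ∈ (torusCharacter ι).range, χ x ≠ χ y := by
  obtain ⟨i, hi⟩ := Function.ne_iff.1 hxy
  exact ⟨_, ⟨.ofAdd (Finsupp.single i 1), rfl⟩, by simpa only [torusCharacter_ofAdd_single_one]⟩

end TorusCharacter

section BernoulliMeasure

theorem IsBernoulliMeasure.eq_infinitePi {ι X₀ : Type*} [MeasurableSpace X₀] {μ₀ : Measure X₀}
    [IsProbabilityMeasure μ₀] {μ : Measure (ι → X₀)} (hμ : IsBernoulliMeasure μ₀ μ) :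
    μ = Measure.infinitePi fun _ => μ₀ :=
  Measure.eq_infinitePi _ fun s t ht => hμ s t ht

theorem measurePreserving_bernoulliShift [Group G] {X₀ : Type*} [MeasurableSpace X₀]
    (μ₀ : Measure X₀) [IsProbabilityMeasure μ₀] (g : G) :
    MeasurePreserving (bernoulliShift G X₀ g) (Measure.infinitePi fun _ => μ₀)
      (Measure.infinitePi fun _ => μ₀) := by
  have hshift : bernoulliShift G X₀ g
      = MeasurableEquiv.piCongrLeft (fun _ => X₀) (Equiv.mulLeft g) := by
    ext x h
    obtain ⟨h, rfl⟩ := (Equiv.mulLeft g).surjective h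
    rw [MeasurableEquiv.coe_piCongrLeft, Equiv.piCongrLeft_apply_apply]
    simp [bernoulliShift]
  rw [hshift]
  exact ⟨MeasurableEquiv.measurable _,
    Measure.infinitePi_map_piCongrLeft (fun _ => μ₀) (Equiv.mulLeft g)⟩

instance isMulLeftInvariant_infinitePi {ι : Type*} {Y : ι → Type*} [∀ i, Group (Y i)]
    [∀ i, MeasurableSpace (Y i)] [∀ i, MeasurableMul (Y i)] (μ : ∀ i, Measure (Y i))
    [∀ i, IsProbabilityMeasure (μ i)] [∀ i, (μ i).IsMulLeftInvariant] :
    (Measure.infinitePi μ).IsMulLeftInvariant where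
  map_mul_left_eq_self y := by
    refine (Measure.infinitePi_map_pi μ fun i => measurable_const_mul (y i)).trans ?_
    simp only [map_mul_left_eq_self]

end BernoulliMeasure

section Shift

variable [Group G]

-- The module `ℤG` is encoded as `G →₀ ℤ` with the translation action `(g • m) k = m (g⁻¹ * k)`.
attribute [local instance] Finsupp.comapSMul Finsupp.comapMulAction Finsupp.comapDistribMulAction

theorem torusCharacter_ofAdd_smul (g : G) (m : G →₀ ℤ) (x : G → Circle) :
    torusCharacter G (.ofAdd (g • m)) x
      = torusCharacter G (.ofAdd m) (bernoulliShift G Circle g⁻¹ x) := by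
  rw [torusCharacter_ofAdd_apply, torusCharacter_ofAdd_apply, Finsupp.comapSMul_def,
    Finsupp.prod_mapDomain_index_inj (MulAction.injective g)]
  simp [bernoulliShift]

open groupCohomology

theorem isCoboundary₁_of_finite_range {M : Type*} [AddCommGroup M] {c : G → G →₀ M}
    (hc : IsCocycle₁ c) (hfin : (Set.range c).Finite) : IsCoboundary₁ c := by
  -- Reading the cocycle identity for `g * (g⁻¹ * k) = k` at `k` gives `c g k = c k k - c h h`
  -- with `h = g⁻¹ * k`, so `c` is the coboundary of minus its diagonal.
  have hdiag : (Function.support fun k => c k k).Finite := by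
    refine (hfin.biUnion fun m _ => m.hasFiniteSupport).subset fun k hk => ?_
    exact Set.mem_biUnion (Set.mem_range_self k) hk
  refine ⟨-Finsupp.ofSupportFinite _ hdiag, fun g => Finsupp.ext fun k => ?_⟩
  have hk : c k k = c (g⁻¹ * k) (g⁻¹ * k) + c g k := by
    simpa using DFunLike.congr_fun (hc g (g⁻¹ * k)) k
  simp [Finsupp.ofSupportFinite_coe, hk]

theorem isCoboundary₁_of_finite_range_smul_sub {M : Type*} [AddCommGroup M] {c : G → G →₀ M}
    (hc : IsCocycle₁ c) (m : G →₀ M) (hfin : (Set.range fun g => g • m - c g).Finite) :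
    IsCoboundary₁ c := by
  have hc' : IsCocycle₁ fun g => c g - (g • m - m) := fun g h => by
    simp only [hc g h, smul_sub, mul_smul]
    abel
  have hfin' : (Set.range fun g => c g - (g • m - m)).Finite := by
    refine (hfin.image fun v => m - v).subset ?_
    rintro _ ⟨g, rfl⟩
    exact ⟨_, ⟨g, rfl⟩, by simp only [sub_sub_eq_add_sub, add_comm]⟩
  obtain ⟨n, hn⟩ := isCoboundary₁_of_finite_range hc' hfin'
  refine ⟨n + m, fun g => ?_⟩
  rw [smul_add, add_sub_add_comm, hn g, sub_add_cancel]

theorem isCoboundary₁_of_isCocycleSuperrigid [Countable G] (ν : Measure Circle)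
    [IsProbabilityMeasure ν] [ν.IsMulLeftInvariant]
    (hsurj : IsCocycleSuperrigid (bernoulliShift G Circle) (Measure.infinitePi fun _ => ν))
    {c : G → G →₀ ℤ} (hc : IsCocycle₁ c) : IsCoboundary₁ c := by
  obtain ⟨_, b, hb, hcob⟩ := hsurj (fun g x => torusCharacter G (.ofAdd (c g)) x)
    ⟨fun g => (map_continuous _).measurable, fun g h => ae_of_all _ fun x => by
      simp only [hc g h, ofAdd_add, map_mul, mul_comm, ← torusCharacter_ofAdd_smul]
      rfl⟩
  obtain ⟨_, ⟨m, rfl⟩, hfin⟩ := exists_finite_setOf_character_mul_eq_comp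
    (fun x y hxy => exists_mem_range_torusCharacter_apply_ne hxy)
    (fun g : G => measurePreserving_bernoulliShift ν g⁻¹) hb hcob
  refine isCoboundary₁_of_finite_range_smul_sub hc m.toAdd ?_
  refine (hfin.preimage (f := fun v : G →₀ ℤ => torusCharacter G (.ofAdd v))
    (torusCharacter_injective.comp Multiplicative.ofAdd.injective).injOn).subset ?_
  rintro _ ⟨g, rfl⟩
  refine ⟨g, fun x => ?_⟩
  have h := torusCharacter_ofAdd_smul g m.toAdd x
  rw [← sub_add_cancel (g • m.toAdd) (c g), ofAdd_add, map_mul] at h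
  exact h

theorem h1_ofMulAction_eq_zero_of_isCoboundary₁.{u} {k H : Type u} [CommRing k] [Group H]
    (h : ∀ c : H → H →₀ k, IsCocycle₁ c → IsCoboundary₁ c)
    (x : groupCohomology.H1 (Rep.ofMulAction k H H)) : x = 0 := by
  induction x using H1_induction_on with
  | h f =>
    have hcocycle : IsCocycle₁ fun g => MonoidAlgebra.coeff (f g) := fun g₁ g₂ =>
      Finsupp.ext fun v => by
        have hf := (mem_cocycles₁_iff (f : H → Rep.ofMulAction k H H)).1 f.2 g₁ g₂
        have := congrArg (fun m : MonoidAlgebra k H => m.coeff v) hf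
        simpa [Representation.coeff_ofMulAction] using this
    obtain ⟨m, hm⟩ := h _ hcocycle
    refine (H1π_eq_zero_iff f).2 ⟨MonoidAlgebra.ofCoeff m, funext fun g => ?_⟩
    refine MonoidAlgebra.coeff_injective (Finsupp.ext fun v => ?_)
    have := DFunLike.congr_fun (hm g) v
    rw [d₀₁_hom_apply]
    simpa [Representation.coeff_ofMulAction] using this

end Shift

theorem h1_zg_trivial_of_psi1_surjective_general (G : Type) [Group G] [Countable G]
    (ν : Measure Circle) [IsProbabilityMeasure ν] [ν.IsMulLeftInvariant]
    (μ : Measure (G → Circle)) (hμ : IsBernoulliMeasure ν μ)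
    (hsurj : IsCocycleSuperrigid (bernoulliShift G Circle) μ) :
    ∀ x : groupCohomology.H1 (Rep.ofMulAction ℤ G G), x = 0 := by
  obtain rfl := hμ.eq_infinitePi
  exact h1_ofMulAction_eq_zero_of_isCoboundary₁ fun _ hc =>
    isCoboundary₁_of_isCocycleSuperrigid ν hsurj hc

/-- Let `G ∈ 𝒢` be countable infinite and consider the Bernoulli
shift `G ↷ (𝕋^G, ν^G)` where `ν` is the Haar probability measure on `𝕋`.  If the
natural map `Ψ₁ : H¹(G, 𝕋) → H¹(G ↷ 𝕋^G; 𝕋)` is surjective — equivalently, every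
measurable 1-cocycle is cohomologous to a homomorphism, i.e. the shift is `𝕋`-cocycle
superrigid — then `H¹(G, ℤG) = 0`. -/
theorem h1_zg_trivial_of_psi1_surjective
    (G : Type) [Group G] [Countable G] [Infinite G] (hG : InClassG G)
    (ν : Measure Circle) [IsProbabilityMeasure ν] [ν.IsHaarMeasure]
    (μ : Measure (G → Circle)) [IsProbabilityMeasure μ] (hμ : IsBernoulliMeasure ν μ)
    (hsurj : IsCocycleSuperrigid (bernoulliShift G Circle) μ) :
    ∀ x : groupCohomology.H1 (Rep.ofMulAction ℤ G G), x = 0 := by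
  exact h1_zg_trivial_of_psi1_surjective_general G ν μ hμ hsurj

end AlgActCohomology
end
end
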